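/- The triangular array b^n_k defined by b^n_k = Σ_{l=1}^{k+1} (-1)^{l+1} · C(n-l, k+1-l) · Σ_{compositions m of n with length l} n!/(m_1!⋯m_l!) satisfies the symmetry b^n_k = (-1)^{n+1} · b^n_{n-1-k} for all 0 ≤ k ≤ n-1. -/

import Mathlib

open Finset

/-- The coefficients `b^n_k` (as real numbers). -/
noncomputable def bcoef (n k : ℕ) : ℝ :=
  ∑ l ∈ Finset.Icc 1 (k + 1),
    (-1 : ℝ) ^ (l + 1) * (Nat.choose (n - l) (k + 1 - l) : ℝ) *
      ∑ c ∈ Finset.univ.filter (fun c : Composition n => c.length = l),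
        ((n.factorial : ℝ) / ((c.blocks.map Nat.factorial).prod : ℝ))

/-!
The inner sum of `bcoef n k` is `n!` times the `n`-th coefficient of `(exp - 1) ^ l`, which counts
the surjections from an `n`-element set onto an `l`-element set. Frobenius' formula for the Eulerian
numbers `A(n, k)` then reads `bcoef n k = (-1) ^ k * A(n, k)` for `n ≥ 1`, both sides obeying the
same recurrence, and the symmetry of `bcoef` is that of the Eulerian numbers,
`A(n, k) = A(n, n - 1 - k)`, up to sign.
-/

section Eulerian

/-- The Eulerian number `A(n, k)`, counting the permutations of `n` letters with exactly `k`
descents, defined by its recurrence. The truncated subtraction `n - k` is harmless, since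
`A(n, k) = 0` for `n < k`. -/
def eulerian : ℕ → ℕ → ℕ
  | 0, 0 => 1
  | 0, _ + 1 => 0
  | _ + 1, 0 => 1
  | n + 1, k + 1 => (k + 2) * eulerian n (k + 1) + (n - k) * eulerian n k

theorem eulerian_zero_right (n : ℕ) : eulerian n 0 = 1 := by
  cases n <;> rfl

theorem eulerian_zero_succ (k : ℕ) : eulerian 0 (k + 1) = 0 := rfl

theorem eulerian_succ_succ (n k : ℕ) :
    eulerian (n + 1) (k + 1) = (k + 2) * eulerian n (k + 1) + (n - k) * eulerian n k := rfl

theorem eulerian_succ_eq_zero_of_lt {n k : ℕ} (h : n < k) : eulerian (n + 1) k = 0 := by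
  obtain ⟨k, rfl⟩ := Nat.exists_eq_add_one_of_ne_zero (Nat.ne_zero_of_lt h)
  induction n generalizing k with
  | zero => simp [eulerian_succ_succ, eulerian_zero_succ]
  | succ n ih =>
    rw [eulerian_succ_succ, ih k (by lia), Nat.sub_eq_zero_of_le (by lia)]
    ring

theorem eulerian_eq_zero_of_lt {n k : ℕ} (h : n < k) : eulerian n k = 0 := by
  obtain _ | n := n
  · obtain ⟨k, rfl⟩ := Nat.exists_eq_add_one_of_ne_zero h.ne'
    exact eulerian_zero_succ k
  · exact eulerian_succ_eq_zero_of_lt (by lia)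

theorem cast_eulerian_succ_succ {R : Type*} [CommRing R] (n k : ℕ) :
    (eulerian (n + 1) (k + 1) : R) = (k + 2) * eulerian n (k + 1) + (n - k) * eulerian n k := by
  rw [eulerian_succ_succ]
  obtain h | h := le_or_gt k n
  · push_cast [h]
    rfl
  · simp [eulerian_eq_zero_of_lt h]

theorem eulerian_succ_self (n : ℕ) : eulerian (n + 1) n = 1 := by
  induction n with
  | zero => rfl
  | succ n ih => simp [eulerian_succ_succ (n + 1), eulerian_succ_eq_zero_of_lt n.lt_succ_self, ih]

theorem eulerian_symm_of_add_eq {n i j : ℕ} (h : i + j = n) :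
    eulerian (n + 1) i = eulerian (n + 1) j := by
  induction n generalizing i j with
  | zero => grind
  | succ n ih =>
    match i, j with
    | 0, j =>
      obtain rfl : j = n + 1 := by lia
      rw [eulerian_zero_right, eulerian_succ_self]
    | i, 0 =>
      obtain rfl : i = n + 1 := by lia
      rw [eulerian_zero_right, eulerian_succ_self]
    | i + 1, j + 1 =>
      rw [eulerian_succ_succ (n + 1) i, eulerian_succ_succ (n + 1) j,
        ih (i := i + 1) (j := j) (by lia), ih (i := i) (j := j + 1) (by lia),
        show n + 1 - i = j + 2 by lia, show n + 1 - j = i + 2 by lia, add_comm]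

end Eulerian

section Surjections

open PowerSeries
open scoped Nat

/-- The number `k! S(n, k)` of surjections from an `n`-element set onto a `k`-element set, with
`S(n, k)` the Stirling number of the second kind. -/
def surjectionNumber (n k : ℕ) : ℕ := k ! * n.stirlingSecond k

theorem surjectionNumber_succ_succ (n k : ℕ) :
    surjectionNumber (n + 1) (k + 1) =
      (k + 1) * (surjectionNumber n (k + 1) + surjectionNumber n k) := by
  simp only [surjectionNumber, Nat.stirlingSecond_succ_succ, Nat.factorial_succ]
  ring

theorem surjectionNumber_eq_zero_of_lt {n k : ℕ} (h : n < k) : surjectionNumber n k = 0 := by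
  rw [surjectionNumber, Nat.stirlingSecond_eq_zero_of_lt h, mul_zero]

theorem surjectionNumber_succ_zero (n : ℕ) : surjectionNumber (n + 1) 0 = 0 := by
  simp [surjectionNumber]

theorem surjectionNumber_succ_one (n : ℕ) : surjectionNumber (n + 1) 1 = 1 := by
  simp [surjectionNumber, Nat.stirlingSecond_one_right]

theorem coeff_pow_eq_sum_composition {R : Type*} [CommSemiring R] {f : R⟦X⟧}
    (hf : constantCoeff f = 0) (n l : ℕ) :
    coeff n (f ^ l) =
      ∑ c : Composition n with c.length = l, (c.blocks.map fun m ↦ coeff m f).prod := by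
  have coeff_pow_fin :
      coeff n (f ^ l) = ∑ m ∈ finsuppAntidiag (univ : Finset (Fin l)) n, ∏ i, coeff (m i) f := by
    rw [← coeff_prod, prod_const, card_univ, Fintype.card_fin]
  have parts_pos : ∀ m ∈ finsuppAntidiag (univ : Finset (Fin l)) n,
      ∏ i, coeff (m i) f ≠ 0 → ∀ i, 0 < m i := by
    refine fun m _ hm i ↦ Nat.pos_of_ne_zero fun hi ↦ hm (prod_eq_zero (mem_univ i) ?_)
    rw [hi, coeff_zero_eq_constantCoeff_apply, hf]
  rw [coeff_pow_fin, ← sum_filter_of_ne parts_pos]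
  refine sum_bij (fun m hm ↦ ⟨List.ofFn m, ?_, ?_⟩) ?_ ?_ ?_ ?_
  · simp_all
  · simp_all [List.sum_ofFn]
  · simp_all [Composition.length]
  · intro m _ m' _ h
    exact DFunLike.coe_injective (List.ofFn_injective (congrArg Composition.blocks h))
  · intro c hc
    obtain rfl : c.length = l := by simpa using hc
    have blocksFun_mem :
        Finsupp.equivFunOnFinite.symm c.blocksFun ∈ finsuppAntidiag univ n := by
      simp [c.sum_blocksFun]
    exact ⟨_, mem_filter.mpr ⟨blocksFun_mem, c.one_le_blocksFun⟩,
      Composition.ext c.ofFn_blocksFun⟩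
  · simp [List.map_ofFn, List.prod_ofFn]

theorem derivative_exp_sub_one_pow_succ (A : Type*) [CommRing A] [Algebra ℚ A] (l : ℕ) :
    d⁄dX A ((exp A - 1) ^ (l + 1)) =
      ((l + 1 : ℕ) : A⟦X⟧) * ((exp A - 1) ^ (l + 1) + (exp A - 1) ^ l) := by
  rw [derivative_pow, map_sub, derivative_exp, derivative_one, Nat.add_sub_cancel]
  ring

theorem factorial_mul_coeff_exp_sub_one_pow (A : Type*) [CommRing A] [Algebra ℚ A] (n l : ℕ) :
    (n ! : A) * coeff n ((exp A - 1) ^ l) = surjectionNumber n l := by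
  induction n generalizing l with
  | zero => cases l <;> simp [surjectionNumber]
  | succ n ih =>
    obtain _ | l := l
    · simp [surjectionNumber_succ_zero, coeff_one]
    have coeff_deriv := coeff_derivative ((exp A - 1) ^ (l + 1)) n
    rw [derivative_exp_sub_one_pow_succ, ← map_natCast (C (R := A)), coeff_C_mul,
      map_add] at coeff_deriv
    rw [surjectionNumber_succ_succ, Nat.factorial_succ]
    push_cast at coeff_deriv ⊢
    rw [← ih, ← ih]
    linear_combination -(n ! : A) * coeff_deriv

theorem sum_composition_factorial_div {K : Type*} [Field K] [CharZero K] (n l : ℕ) :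
    ∑ c : Composition n with c.length = l, (n ! : K) / ((c.blocks.map Nat.factorial).prod : K) =
      surjectionNumber n l := by
  have coeff_exp_sub_one {m : ℕ} (hm : 0 < m) : coeff m (exp K - 1) = (m ! : K)⁻¹ := by
    simp [coeff_exp, coeff_one, hm.ne']
  rw [← factorial_mul_coeff_exp_sub_one_pow, coeff_pow_eq_sum_composition (by simp), mul_sum]
  refine sum_congr rfl fun c _ ↦ ?_
  rw [div_eq_mul_inv, List.map_congr_left fun m hm ↦ coeff_exp_sub_one (c.blocks_pos hm)]
  simp only [Nat.cast_list_prod, List.prod_inv, List.map_map, Function.comp_def]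

end Surjections

section Binomial

variable {R : Type*} [CommRing R]

theorem cast_choose_succ_right_eq (n k : ℕ) :
    (n.choose (k + 1) : R) * (k + 1) = n.choose k * (n - k) := by
  obtain h | h := le_or_gt k n
  · exact_mod_cast congrArg (Nat.cast (R := R)) (n.choose_succ_right_eq k)
  · simp [Nat.choose_eq_zero_of_lt h, Nat.choose_eq_zero_of_lt (Nat.lt_succ_of_lt h)]

theorem choose_mul_sub_choose_mul (m i : ℕ) (x : R) :
    ((m + 1).choose (i + 1) : R) * (x + 1) - m.choose i * (x + 2) =
      (i + x + 2) * m.choose (i + 1) - (m + 1 - i) * m.choose i := by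
  rw [Nat.choose_succ_succ']
  push_cast
  linear_combination -cast_choose_succ_right_eq (R := R) m i

end Binomial

section Frobenius

/-- The alternating sum of surjection numbers which, by Frobenius' formula, equals
`(-1) ^ k * A(n, k)`. A pair `(j, i)` stands for the summand with `l = j + 1` and
`k + 1 - l = i` of `bcoef n k`. -/
def frobeniusSum (n k : ℕ) : ℤ :=
  ∑ p ∈ antidiagonal k, (-1) ^ p.1 * (n - (p.1 + 1)).choose p.2 * surjectionNumber n (p.1 + 1)

theorem bcoef_eq_frobeniusSum (n k : ℕ) : bcoef n k = frobeniusSum n k := by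
  rw [bcoef, frobeniusSum, Nat.sum_antidiagonal_eq_sum_range_succ_mk,
    ← Ico_add_one_right_eq_Icc, sum_Ico_eq_sum_range, Int.cast_sum]
  refine sum_congr rfl fun j _ ↦ ?_
  rw [add_comm 1 j, sum_composition_factorial_div, Nat.add_sub_add_right]
  push_cast
  ring

theorem frobeniusSum_zero_left (k : ℕ) : frobeniusSum 0 k = 0 :=
  sum_eq_zero fun p _ ↦ by rw [surjectionNumber_eq_zero_of_lt p.1.succ_pos]; simp

theorem frobeniusSum_succ_zero (n : ℕ) : frobeniusSum (n + 1) 0 = 1 := by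
  simp [frobeniusSum, surjectionNumber_succ_one]

theorem frobeniusSum_succ_right (n k : ℕ) :
    frobeniusSum n (k + 1) =
      (-1) ^ (k + 1) * (surjectionNumber n (k + 2) : ℤ) + ∑ p ∈ antidiagonal k,
        (-1) ^ p.1 * ((n - (p.1 + 1)).choose (p.2 + 1) : ℤ) * surjectionNumber n (p.1 + 1) := by
  rw [frobeniusSum, Nat.sum_antidiagonal_succ', Nat.choose_zero_right, Nat.cast_one, mul_one]

theorem frobeniusSum_succ_succ_eq_sum (n k : ℕ) :
    frobeniusSum (n + 1) (k + 1) =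
      (-1) ^ (k + 1) * (k + 2) * (surjectionNumber n (k + 2) : ℤ) + ∑ p ∈ antidiagonal k,
        (-1) ^ p.1 * (((n - p.1).choose (p.2 + 1) : ℤ) * (p.1 + 1) -
          (n - (p.1 + 1)).choose p.2 * (p.1 + 2)) * surjectionNumber n (p.1 + 1) := by
  have choose_mul_surjectionNumber_zero : n.choose (k + 1) * surjectionNumber n 0 = 0 := by
    cases n <;> simp [surjectionNumber_succ_zero]
  have split_summand (p : ℕ × ℕ) :
      (-1) ^ p.1 * ((n + 1 - (p.1 + 1)).choose p.2 : ℤ) * surjectionNumber (n + 1) (p.1 + 1) =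
        (-1) ^ p.1 * (n - p.1).choose p.2 * (p.1 + 1) * surjectionNumber n (p.1 + 1) +
          (-1) ^ p.1 * (p.1 + 1) * ((n - p.1).choose p.2 * surjectionNumber n p.1 : ℕ) := by
    rw [surjectionNumber_succ_succ, Nat.add_sub_add_right]
    push_cast
    ring
  simp only [frobeniusSum, split_summand, sum_add_distrib]
  rw [Nat.sum_antidiagonal_succ', Nat.sum_antidiagonal_succ, Nat.sub_zero,
    choose_mul_surjectionNumber_zero, add_assoc]
  congr 1
  · rw [Nat.choose_zero_right]
    push_cast
    ring
  rw [Nat.cast_zero, mul_zero, zero_add, ← sum_add_distrib]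
  refine sum_congr rfl fun p _ ↦ ?_
  push_cast
  ring

theorem frobeniusSum_succ_succ (n k : ℕ) :
    frobeniusSum (n + 1) (k + 1) =
      (k + 2) * frobeniusSum n (k + 1) - (n - k) * frobeniusSum n k := by
  rw [frobeniusSum_succ_succ_eq_sum, frobeniusSum_succ_right, frobeniusSum,
    mul_add (k + 2 : ℤ), mul_sum, mul_sum, add_sub_assoc, ← sum_sub_distrib]
  congr 1
  · ring
  refine sum_congr rfl fun p hp ↦ ?_
  obtain rfl : p.1 + p.2 = k := mem_antidiagonal.mp hp
  obtain h | h := lt_or_ge n (p.1 + 1)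
  · simp [surjectionNumber_eq_zero_of_lt h]
  obtain ⟨m, rfl⟩ := Nat.exists_eq_add_of_le' h
  rw [Nat.add_sub_cancel, show m + (p.1 + 1) - p.1 = m + 1 by lia, choose_mul_sub_choose_mul]
  push_cast
  ring

theorem frobeniusSum_succ_eq_eulerian (n k : ℕ) :
    frobeniusSum (n + 1) k = (-1) ^ k * eulerian (n + 1) k := by
  induction n generalizing k with
  | zero =>
    obtain _ | k := k
    · simp [frobeniusSum_succ_zero, eulerian_zero_right]
    · simp [frobeniusSum_succ_succ, frobeniusSum_zero_left, eulerian_succ_eq_zero_of_lt]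
  | succ n ih =>
    obtain _ | k := k
    · simp [frobeniusSum_succ_zero, eulerian_zero_right]
    · rw [frobeniusSum_succ_succ, ih, ih, cast_eulerian_succ_succ (n + 1)]
      push_cast
      ring

theorem bcoef_succ_eq_eulerian (n k : ℕ) :
    bcoef (n + 1) k = (-1) ^ k * eulerian (n + 1) k := by
  rw [bcoef_eq_frobeniusSum, frobeniusSum_succ_eq_eulerian]
  push_cast
  rfl

end Frobenius

theorem bcoef_symmetry (n k : ℕ) (hn : 1 ≤ n) (hk : k ≤ n - 1) :
    bcoef n k = (-1 : ℝ) ^ (n + 1) * bcoef n (n - 1 - k) := by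
  obtain ⟨m, rfl⟩ := Nat.exists_eq_add_of_le' hn
  obtain ⟨j, hj⟩ : ∃ j, k + j = m := Nat.le.dest hk
  have sign : (-1 : ℝ) ^ (m + 1 + 1) * (-1) ^ j = (-1) ^ k := by
    rw [← pow_add, show m + 1 + 1 + j = k + 2 * (j + 1) by lia, pow_add, pow_mul]
    simp
  rw [show m + 1 - 1 - k = j by lia, bcoef_succ_eq_eulerian, bcoef_succ_eq_eulerian, ← mul_assoc,
    sign, eulerian_symm_of_add_eq hj]
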